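/- Let p be a prime and A ∈ GL_N(ℤ) an integer matrix invertible over ℤ with A ≡ 1 (mod p), and assume that no complex root of the characteristic polynomial of A is a root of unity. Set ε = sign(det(A − 1)) if p is odd and ε = sign(det(A² − 1)) if p = 2 (a sign in {±1}, computed over ℝ). Viewing A in M_N(ℤ_p), let L = log(A) = Σ_{j=1}^∞ (−1)^{j−1}(A−1)^j / j ∈ M_N(ℚ_p). Then det(A^{p^n} − 1) is a nonzero integer for every n ∈ ℕ, det(L) ≠ 0, and the sequence of positive integers t_n = |det(A^{p^n} − 1)| · p^{−ν_p(det(A^{p^n} − 1))} (the p′-part of |det(A^{p^n} − 1)|) converges in ℤ_p to ε · det(L) · p^{−v_p(det L)}, where v_p(det L) denotes the p-adic valuation of det(L) ∈ ℚ_p. -/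

import Mathlib

open Filter
theorem aux_pow {N : ℕ} (c : ℤ) (C : Matrix (Fin N) (Fin N) ℤ) (m : ℕ) :
    ∃ C', (1 + c • C) ^ m = 1 + c • C' := by
  induction m with
  | zero => exact ⟨0, by simp⟩
  | succ m ih =>
    obtain ⟨D, hD⟩ := ih
    refine ⟨C + D * (1 + c • C), ?_⟩
    rw [pow_succ, hD]
    simp only [add_mul, mul_add, one_mul, mul_one, smul_add, smul_mul_assoc, mul_smul_comm]
    abel

theorem aux_geom {N : ℕ} (c : ℤ) (C : Matrix (Fin N) (Fin N) ℤ) (m : ℕ) :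
    ∃ C', ∑ i ∈ Finset.range m, (1 + c • C) ^ i = (m : ℤ) • (1 : Matrix (Fin N) (Fin N) ℤ) + c • C' := by
  choose f hf using aux_pow c C
  refine ⟨∑ i ∈ Finset.range m, f i, ?_⟩
  rw [Finset.sum_congr rfl fun i _ => hf i, Finset.sum_add_distrib, Finset.smul_sum]
  simp

theorem aux_det {N : ℕ} (p : ℕ) [hp : Fact p.Prime] (V : Matrix (Fin N) (Fin N) ℤ) :
    ¬ (p : ℤ) ∣ (1 + (p:ℤ) • V).det := by
  rw [← ZMod.intCast_zmod_eq_zero_iff_dvd]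
  have : (((1 + (p:ℤ) • V).det : ℤ) : ZMod p) = 1 := by
    have := RingHom.map_det (Int.castRingHom (ZMod p)) (1 + (p:ℤ) • V)
    have h2 : (Int.castRingHom (ZMod p)).mapMatrix (1 + (p:ℤ) • V) = 1 := by
      rw [map_add, map_one]
      ext i j
      rw [Matrix.add_apply, RingHom.mapMatrix_apply, Matrix.map_apply, Matrix.smul_apply]
      simp
    rw [h2] at this
    simpa using this
  rw [this]; exact one_ne_zero

/-- step -/
theorem aux_step {N : ℕ} (p : ℕ) [hp : Fact p.Prime] (A : Matrix (Fin N) (Fin N) ℤ)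
    (hA1 : ∀ i j, (p : ℤ) ∣ (A - 1) i j) (n : ℕ) (hn : 1 ≤ n) :
    ∃ d : ℤ, ¬ (p:ℤ) ∣ d ∧ (A ^ p ^ (n+1) - 1).det = p ^ N * (A ^ p ^ n - 1).det * d := by
  choose C hC using hA1
  have hA : A = 1 + (p:ℤ) • (Matrix.of C) := by
    ext i j
    have := hC i j
    simp [Matrix.sub_apply] at this ⊢
    linarith
  obtain ⟨E, hE⟩ := aux_geom (p:ℤ) (Matrix.of C) p
  rw [← hA] at hE
  have h1 : A ^ p = 1 + ((p:ℤ)^2) • (Matrix.of C * (1 + E)) := by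
    have := mul_geom_sum A p
    rw [hE] at this
    rw [sub_eq_iff_eq_add.mp this.symm]
    nth_rw 1 [hA]
    rw [add_sub_cancel_left, ← smul_add, smul_mul_smul_comm, ← sq, add_comm]
  obtain ⟨n, rfl⟩ := Nat.exists_eq_add_of_le' hn
  obtain ⟨F, hF⟩ := aux_pow ((p:ℤ)^2) (Matrix.of C * (1 + E)) (p ^ n)
  rw [← h1, ← pow_mul, ← pow_succ'] at hF
  obtain ⟨G, hG⟩ := aux_geom ((p:ℤ)^2) F p
  rw [← hF] at hG
  refine ⟨(1 + (p:ℤ) • G).det, aux_det p G, ?_⟩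
  have := mul_geom_sum (A ^ p ^ (n+1)) p
  rw [← pow_mul, ← pow_succ] at this
  rw [← this, hG, sq, mul_smul, ← smul_add, Matrix.det_mul, Matrix.det_smul]
  simp
  ring

theorem aux_choose (p : ℕ) [hp : Fact p.Prime] (k : ℕ) :
    Tendsto (fun n : ℕ => (((p ^ n - 1).choose k : ℕ) : ℚ_[p])) atTop (nhds ((-1) ^ k)) := by
  induction k with
  | zero => simp
  | succ k ih =>
    have hp0 : Tendsto (fun n : ℕ => (p : ℚ_[p]) ^ n) atTop (nhds 0) :=
      tendsto_pow_atTop_nhds_zero_of_norm_lt_one Padic.norm_p_lt_one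
    have := (((hp0.mul ih).div_const ((k + 1 : ℕ) : ℚ_[p])).sub ih)
    rw [zero_mul, zero_div, zero_sub] at this
    rw [pow_succ, mul_neg_one]
    refine this.congr fun n => ?_
    have hk : ((k + 1 : ℕ) : ℚ_[p]) ≠ 0 := by exact_mod_cast Nat.succ_ne_zero k
    have hpos : 0 < p ^ n := pow_pos hp.out.pos n
    obtain ⟨q, hq⟩ := Nat.exists_eq_add_of_le' hpos
    have e1 := Nat.add_one_mul_choose_eq q k
    have e2 := Nat.choose_succ_succ q k
    have hq' : (p : ℚ_[p]) ^ n = ((q + 1 : ℕ) : ℚ_[p]) := by rw [← hq]; push_cast; rfl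
    rw [hq', hq, Nat.add_sub_cancel, sub_eq_iff_eq_add, div_eq_iff hk]
    rw [Nat.succ_eq_add_one] at e2
    rw [e2] at e1
    have := congrArg (Nat.cast : ℕ → ℚ_[p]) e1
    push_cast at this ⊢
    rw [this]; ring

theorem aux_cc (z : ℂ) : ∃ r : ℝ, 0 ≤ r ∧ z * (starRingEnd ℂ) z = r := ⟨Complex.normSq z, Complex.normSq_nonneg z, Complex.mul_conj z⟩

/-- conj of det -/
theorem aux_conj {N : ℕ} (M : Matrix (Fin N) (Fin N) ℤ) (z : ℂ) :
    (starRingEnd ℂ) ((Int.castRingHom ℂ).mapMatrix M - z • 1).det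
      = ((Int.castRingHom ℂ).mapMatrix M - (starRingEnd ℂ) z • 1).det := by
  rw [RingHom.map_det]
  congr 1
  ext i j
  by_cases h : i = j <;> simp [Matrix.one_apply, h]

theorem aux_prod {N : ℕ} (M : Matrix (Fin N) (Fin N) ℂ) (k : ℕ) (hk : 0 < k) (ζ : ℂ)
    (hζ : IsPrimitiveRoot ζ k) :
    (M ^ k - 1).det = ∏ j ∈ Finset.range k, (M - (ζ ^ j) • 1).det := by
  have h0 : (Polynomial.X ^ k - 1 : Polynomial ℂ)
      = ∏ j ∈ Finset.range k, (Polynomial.X - Polynomial.C (ζ ^ j)) := by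
    rw [← Polynomial.C_1, (X_pow_sub_C_splits_of_isPrimitiveRoot hζ (one_pow (M := ℂ) k)).eq_prod_roots_of_monic
      (Polynomial.monic_X_pow_sub_C _ hk.ne'), ← Polynomial.nthRoots, hζ.nthRoots_eq (one_pow (M := ℂ) k),
      Multiset.map_map]
    simp only [mul_one]
    rfl
  let f : Polynomial ℂ →* ℂ :=
    Matrix.detMonoidHom.comp (Polynomial.aeval M : Polynomial ℂ →ₐ[ℂ] Matrix (Fin N) (Fin N) ℂ).toRingHom.toMonoidHom
  have h1 := congrArg f h0
  rw [map_prod] at h1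
  have h2 : ∀ j, f (Polynomial.X - Polynomial.C (ζ ^ j)) = (M - (ζ ^ j) • 1).det := by
    intro j
    rw [← Algebra.algebraMap_eq_smul_one]
    simp [f]
  rw [← Finset.prod_congr rfl fun j _ => h2 j, ← h1]
  simp [f]

theorem aux_ne {N : ℕ} (A : Matrix (Fin N) (Fin N) ℤ)
    (hroot : ∀ ζ : ℂ, Polynomial.aeval ζ A.charpoly = 0 → ∀ n : ℕ, 0 < n → ζ ^ n ≠ 1)
    (k : ℕ) (hk : 0 < k) : (A ^ k - 1).det ≠ 0 := by
  intro h
  have hζ := Complex.isPrimitiveRoot_exp k hk.ne'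
  set ζ := Complex.exp (2 * Real.pi * Complex.I / k)
  have h1 := aux_prod ((Int.castRingHom ℂ).mapMatrix A) k hk ζ hζ
  rw [← map_pow, ← map_one (Int.castRingHom ℂ).mapMatrix, ← map_sub, ← RingHom.map_det, h,
    map_zero, eq_comm, Finset.prod_eq_zero_iff] at h1
  obtain ⟨j, -, hj⟩ := h1
  refine hroot (ζ ^ j) ?_ k hk ?_
  · rw [Polynomial.aeval_def, ← Polynomial.eval_map]
    have := Matrix.charpoly_map A (Int.castRingHom ℂ)
    rw [show algebraMap ℤ ℂ = Int.castRingHom ℂ from rfl, ← this, Matrix.eval_charpoly,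
      ← neg_sub, Matrix.det_neg]
    rw [map_one] at hj
    rw [← Algebra.algebraMap_eq_smul_one] at hj
    erw [hj]; simp
  · rw [← pow_mul, mul_comm, pow_mul, hζ.pow_eq_one, one_pow]

theorem aux_sign_odd {N : ℕ} (M : Matrix (Fin N) (Fin N) ℤ) (k : ℕ) :
    ∃ r : ℝ, 0 ≤ r ∧ (((M ^ (2 * k + 1) - 1).det : ℤ) : ℝ) = ((M - 1).det : ℤ) * r := by
  have hζ := Complex.isPrimitiveRoot_exp (2 * k + 1) (by omega)
  set ζ := Complex.exp (2 * Real.pi * Complex.I / (2 * k + 1 : ℕ))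
  have h1 := aux_prod ((Int.castRingHom ℂ).mapMatrix M) (2 * k + 1) (by omega) ζ hζ
  set f : ℂ → ℂ := fun z => ((Int.castRingHom ℂ).mapMatrix M - z • 1).det with hf
  have hc : ∀ i j, i + j = 2 * k + 1 → f (ζ ^ i) = (starRingEnd ℂ) (f (ζ ^ j)) := by
    intro i j hij
    rw [hf, aux_conj]
    congr 3
    have hn : ‖ζ ^ j‖ = 1 := by rw [norm_pow, hζ.norm'_eq_one (by omega), one_pow]
    rw [← Complex.inv_eq_conj hn]
    refine eq_inv_of_mul_eq_one_left ?_
    rw [← pow_add, hij, hζ.pow_eq_one]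
  have h2 : ∏ j ∈ Finset.range (2 * k + 1), f (ζ ^ j) =
      ((∏ j ∈ Finset.range k, f (ζ ^ (j + 1))) *
        (starRingEnd ℂ) (∏ j ∈ Finset.range k, f (ζ ^ (j + 1)))) * f 1 := by
    rw [Finset.prod_range_succ', pow_zero, two_mul, Finset.prod_range_add]
    congr 2
    rw [map_prod, ← Finset.prod_range_reflect]
    refine Finset.prod_congr rfl fun j hj => hc _ _ ?_
    have := Finset.mem_range.mp hj
    omega
  obtain ⟨r, hr, hr'⟩ := aux_cc (∏ j ∈ Finset.range k, f (ζ ^ (j + 1)))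
  refine ⟨r, hr, ?_⟩
  have h3 := h1.trans h2
  rw [hr', hf] at h3
  dsimp only at h3
  rw [one_smul, ← map_pow, ← map_one (Int.castRingHom ℂ).mapMatrix, ← map_sub, ← map_sub,
    ← RingHom.map_det, ← RingHom.map_det, mul_comm] at h3
  apply Complex.ofReal_injective
  rw [Complex.ofReal_mul, Complex.ofReal_intCast, Complex.ofReal_intCast, mul_comm _ (r : ℂ)]
  rw [mul_comm k 2] at h3
  exact h3

theorem aux_sign_two {N : ℕ} (M : Matrix (Fin N) (Fin N) ℤ) :
    ∃ r : ℝ, 0 ≤ r ∧ (((M ^ 4 - 1).det : ℤ) : ℝ) = ((M ^ 2 - 1).det : ℤ) * r := by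
  obtain ⟨r, hr, hr'⟩ := aux_cc ((Int.castRingHom ℂ).mapMatrix M - Complex.I • 1).det
  refine ⟨r, hr, ?_⟩
  rw [aux_conj, ← Matrix.det_mul] at hr'
  have h1 : ((Int.castRingHom ℂ).mapMatrix M - Complex.I • 1) *
     ((Int.castRingHom ℂ).mapMatrix M - (starRingEnd ℂ) Complex.I • 1) =
      (Int.castRingHom ℂ).mapMatrix (M ^ 2 + 1) := by
    rw [map_add, map_pow, map_one, Complex.conj_I]
    simp only [sub_mul, mul_sub, smul_mul_assoc, mul_smul_comm, one_mul, mul_one, smul_sub, smul_smul, sq,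
      neg_smul, mul_neg, Complex.I_mul_I, one_smul, neg_mul, neg_neg]
    abel
  rw [h1, ← RingHom.map_det] at hr'
  have h2 : M ^ 4 - 1 = (M ^ 2 - 1) * (M ^ 2 + 1) := by noncomm_ring
  rw [h2, Matrix.det_mul, Int.cast_mul]
  congr 1
  apply Complex.ofReal_injective
  rw [Complex.ofReal_intCast]
  exact hr'

theorem aux_sign {x y : ℤ} (hx : x ≠ 0) {r : ℝ} (hr : 0 ≤ r) (h : (x : ℝ) = y * r) :
    x.sign = y.sign := by
  have hx' : (x:ℝ) ≠ 0 := by exact_mod_cast hx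
  have hr0 : 0 < r := lt_of_le_of_ne hr (by rintro rfl; simp at h; exact hx h)
  rcases lt_trichotomy y 0 with hy | hy | hy
  · have : (x:ℝ) < 0 := by rw [h]; exact mul_neg_of_neg_of_pos (by exact_mod_cast hy) hr0
    rw [Int.sign_eq_neg_one_of_neg hy, Int.sign_eq_neg_one_of_neg (by exact_mod_cast this)]
  · subst hy; simp at h; exact absurd h hx
  · have : (0:ℝ) < x := by rw [h]; exact mul_pos (by exact_mod_cast hy) hr0
    rw [Int.sign_eq_one_of_pos hy, Int.sign_eq_one_of_pos (by exact_mod_cast this)]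

theorem aux_signs {N : ℕ} (p : ℕ) [hp : Fact p.Prime] (A : Matrix (Fin N) (Fin N) ℤ)
    (hne : ∀ n : ℕ, (A ^ p ^ n - 1).det ≠ 0) (n : ℕ) :
    ((A ^ p ^ (n + 1) - 1).det).sign =
      if p = 2 then Int.sign ((A ^ 2 - 1).det) else Int.sign ((A - 1).det) := by
  split_ifs with h
  · subst h
    induction n with
    | zero => simp
    | succ n ih =>
      rw [← ih]
      obtain ⟨r, hr, h⟩ := aux_sign_two (A ^ 2 ^ n)
      rw [← pow_mul, ← pow_mul, show 2 ^ n * 4 = 2 ^ (n + 1 + 1) by ring,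
        show 2 ^ n * 2 = 2 ^ (n + 1) by ring] at h
      exact aux_sign (hne _) hr h
  · obtain ⟨k, hk⟩ := hp.out.odd_of_ne_two h
    have : ∀ n : ℕ, ((A ^ p ^ n - 1).det).sign = (A - 1).det.sign := by
      intro n
      induction n with
      | zero => simp
      | succ n ih =>
        rw [← ih]
        obtain ⟨r, hr, h⟩ := aux_sign_odd (A ^ p ^ n) k
        rw [← hk, ← pow_mul, ← pow_succ] at h
        exact aux_sign (hne _) hr h
    exact this _

theorem aux_entry {N : ℕ} (p : ℕ) [hp : Fact p.Prime] (B : Matrix (Fin N) (Fin N) ℤ)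
    (hB : ∀ i j, (p : ℤ) ∣ B i j) (k : ℕ) : ∀ i j, (p : ℤ) ^ k ∣ (B ^ k) i j := by
  induction k with
  | zero => simp
  | succ k ih =>
    intro i j
    rw [pow_succ, pow_succ, Matrix.mul_apply]
    exact Finset.dvd_sum fun l _ => mul_dvd_mul (ih _ _) (hB _ _)

theorem aux_tannery (p : ℕ) [hp : Fact p.Prime] (z : ℕ → ℤ) (hz : ∀ j, (p : ℤ) ^ j ∣ z j) :
    Summable (fun j : ℕ => (-1 : ℚ_[p]) ^ j * ((z (j + 1) : ℚ_[p]) / ((j + 1 : ℕ) : ℚ_[p]))) ∧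
    Tendsto (fun n : ℕ => ∑' j : ℕ, (((p ^ n - 1).choose j : ℕ) : ℚ_[p]) *
      ((z (j + 1) : ℚ_[p]) / ((j + 1 : ℕ) : ℚ_[p]))) atTop
      (nhds (∑' j : ℕ, (-1 : ℚ_[p]) ^ j * ((z (j + 1) : ℚ_[p]) / ((j + 1 : ℕ) : ℚ_[p])))) := by
  have hp1 : ‖((p:ℝ)⁻¹)‖ < 1 := by
    rw [norm_inv, Real.norm_natCast]
    exact inv_lt_one_of_one_lt₀ (by exact_mod_cast hp.out.one_lt)
  have hcb : ∀ j : ℕ, ‖(z (j + 1) : ℚ_[p]) / ((j + 1 : ℕ) : ℚ_[p])‖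
      ≤ ((j + 1 : ℕ) : ℝ) ^ 1 * ((p:ℝ)⁻¹) ^ (j + 1) := by
    intro j
    have h1 := (Padic.norm_int_le_pow_iff_dvd (p := p) _ _).mpr (hz (j + 1))
    have h2 : ‖(((j + 1 : ℕ) : ℚ_[p]))‖⁻¹ ≤ ((j + 1 : ℕ) : ℝ) := by
      rw [Padic.norm_eq_zpow_neg_valuation (by exact_mod_cast Nat.succ_ne_zero j),
        Padic.valuation_natCast, zpow_neg, inv_inv, zpow_natCast]
      exact_mod_cast Nat.le_of_dvd (Nat.succ_pos j) pow_padicValNat_dvd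
    rw [norm_div, div_eq_mul_inv, mul_comm, pow_one]
    refine mul_le_mul h2 (h1.trans (le_of_eq ?_)) (norm_nonneg _) (Nat.cast_nonneg _)
    rw [zpow_neg, zpow_natCast, inv_pow]
  have hsum : Summable fun j : ℕ => ((j + 1 : ℕ) : ℝ) ^ 1 * ((p:ℝ)⁻¹) ^ (j + 1) :=
    (summable_nat_add_iff (f := fun j : ℕ => (j : ℝ) ^ 1 * ((p:ℝ)⁻¹) ^ j) 1).mpr
      (summable_pow_mul_geometric_of_norm_lt_one 1 hp1)
  constructor
  · refine Summable.of_norm_bounded hsum fun j => ?_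
    rw [norm_mul, norm_pow, norm_neg, norm_one, one_pow, one_mul]
    exact hcb j
  · refine tendsto_tsum_of_dominated_convergence hsum
      (fun j => (aux_choose p j).mul_const _) (Eventually.of_forall fun n j => ?_)
    rw [norm_mul]
    refine le_trans (mul_le_of_le_one_left (norm_nonneg _) ?_) (hcb j)
    exact_mod_cast Padic.norm_int_le_one (p := p) ((p ^ n - 1).choose j : ℤ)

theorem aux_binom {N : ℕ} (p : ℕ) [hp : Fact p.Prime] (B : Matrix (Fin N) (Fin N) ℤ)
    (a b : Fin N) (n : ℕ) :
    ∑' j : ℕ, (((p ^ n - 1).choose j : ℕ) : ℚ_[p]) *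
      ((((B ^ (j + 1)) a b : ℤ) : ℚ_[p]) / ((j + 1 : ℕ) : ℚ_[p])) =
    ((((B + 1) ^ p ^ n - 1) a b : ℤ) : ℚ_[p]) / (p : ℚ_[p]) ^ n := by
  have hpos : 0 < p ^ n := pow_pos hp.out.pos n
  obtain ⟨q, hq⟩ : ∃ q, p ^ n = q + 1 := Nat.exists_eq_add_of_le' hpos
  have hq' : (p : ℚ_[p]) ^ n = ((q + 1 : ℕ) : ℚ_[p]) := by rw [← hq]; push_cast; rfl
  have hq0 : ((q + 1 : ℕ) : ℚ_[p]) ≠ 0 := by exact_mod_cast Nat.succ_ne_zero q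
  rw [hq', hq, Nat.add_sub_cancel]
  clear hq hq' hpos
  rw [tsum_eq_sum (s := Finset.range (q + 1))]
  · have hb : (B + 1) ^ (q + 1) - 1 =
        ∑ j ∈ Finset.range (q + 1), B ^ (j + 1) * (((q + 1).choose (j + 1) : ℕ) : Matrix (Fin N) (Fin N) ℤ) := by
      rw [(Commute.one_right B).add_pow, Finset.sum_range_succ']
      simp only [pow_zero, one_pow, mul_one, Nat.choose_zero_right, Nat.cast_one, add_sub_cancel_right]
    rw [eq_div_iff hq0]
    rw [hb, Matrix.sum_apply, Int.cast_sum, Finset.sum_mul]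
    refine Finset.sum_congr rfl fun j _ => ?_
    have e1 := congrArg (Nat.cast : ℕ → ℚ_[p]) (Nat.add_one_mul_choose_eq q j)
    have hk : ((j + 1 : ℕ) : ℚ_[p]) ≠ 0 := by exact_mod_cast Nat.succ_ne_zero j
    rw [← nsmul_eq_mul' (B ^ (j + 1)), Matrix.smul_apply, mul_div_assoc', div_mul_eq_mul_div, div_eq_iff hk,
      nsmul_eq_mul]
    rw [Nat.cast_mul, Nat.cast_mul] at e1
    rw [Int.cast_mul, Int.cast_natCast]
    linear_combination (((B ^ (j+1)) a b : ℤ) : ℚ_[p]) * e1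
  · intro j hj
    rw [Finset.mem_range, not_lt] at hj
    rw [Nat.choose_eq_zero_of_lt (by omega), Nat.cast_zero, zero_mul]

theorem aux_lim {N : ℕ} (p : ℕ) [hp : Fact p.Prime] (A : Matrix (Fin N) (Fin N) ℤ)
    (hA1 : ∀ i j, (p : ℤ) ∣ (A - 1) i j)
    (L : Matrix (Fin N) (Fin N) ℚ_[p])
    (hL : Tendsto (fun m : ℕ => ∑ j ∈ Finset.Icc 1 m,
        ((-1 : ℚ_[p]) ^ (j - 1) / (j : ℚ_[p])) •
          (A.map (Int.cast : ℤ → ℚ_[p]) - 1) ^ j) atTop (nhds L)) (a b : Fin N) :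
    Tendsto (fun n : ℕ => (((A ^ p ^ n - 1) a b : ℤ) : ℚ_[p]) / (p : ℚ_[p]) ^ n) atTop
      (nhds (L a b)) := by
  obtain ⟨B, hB⟩ : ∃ B, A = B + 1 := ⟨A - 1, (sub_add_cancel A 1).symm⟩
  subst hB
  rw [add_sub_cancel_right] at hA1
  have hmap : ∀ j, ((B + 1).map (Int.cast : ℤ → ℚ_[p]) - 1) ^ j =
      (Int.castRingHom ℚ_[p]).mapMatrix (B ^ j) := by
    intro j
    have : (B + 1).map (Int.cast : ℤ → ℚ_[p]) = (Int.castRingHom ℚ_[p]).mapMatrix (B + 1) := rfl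
    rw [this, map_pow, map_add, map_one, add_sub_cancel_right]
  obtain ⟨hs, key⟩ := aux_tannery p (fun j => (B ^ j) a b) (fun j => aux_entry p B hA1 j a b)
  have hlim : ∑' j : ℕ, (-1 : ℚ_[p]) ^ j *
      ((((B ^ (j + 1)) a b : ℤ) : ℚ_[p]) / ((j + 1 : ℕ) : ℚ_[p])) = L a b := by
    refine tendsto_nhds_unique hs.hasSum.tendsto_sum_nat ?_
    have h := (tendsto_pi_nhds.mp ((tendsto_pi_nhds.mp hL) a)) b
    refine h.congr fun m => ?_
    rw [Matrix.sum_apply, ← Finset.Ico_add_one_right_eq_Icc, Finset.sum_Ico_eq_sum_range]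
    refine Finset.sum_congr rfl fun j _ => ?_
    rw [hmap, Matrix.smul_apply, add_comm 1 j, Nat.add_sub_cancel, smul_eq_mul,
      RingHom.mapMatrix_apply, Matrix.map_apply, div_mul_eq_mul_div, mul_div_assoc]
    rfl
  rw [hlim] at key
  exact key.congr fun n => aux_binom p B a b n

/-- Let `A ∈ GL_N(ℤ)` with `A ≡ 1 (mod p)` and no eigenvalue a root of unity, and let
`L = log A ∈ M_N(ℚ_p)`.  Then `det(A^{p^n} - 1)` is a nonzero integer, `det L ≠ 0`, and
the `p′`-parts `t_n` of `|det(A^{p^n} - 1)|` converge in `ℤ_p` to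
`ε · det(L) · p^{-v_p(det L)}`, where `ε = sign det(A-1)` for `p` odd and
`ε = sign det(A²-1)` for `p = 2`. -/
theorem padic_limit_torsion_pprime_part (p : ℕ) [hp : Fact p.Prime] (N : ℕ) (hN : 1 ≤ N)
    (A : Matrix (Fin N) (Fin N) ℤ) (hunit : IsUnit A.det)
    (hA1 : ∀ i j, (p : ℤ) ∣ (A - 1) i j)
    (hroot : ∀ ζ : ℂ, Polynomial.aeval ζ A.charpoly = 0 → ∀ n : ℕ, 0 < n → ζ ^ n ≠ 1)
    (ε : ℤ)
    (hε : ε = if p = 2 then Int.sign ((A ^ 2 - 1).det) else Int.sign ((A - 1).det))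
    (L : Matrix (Fin N) (Fin N) ℚ_[p])
    (hL : Tendsto (fun m : ℕ => ∑ j ∈ Finset.Icc 1 m,
        ((-1 : ℚ_[p]) ^ (j - 1) / (j : ℚ_[p])) •
          (A.map (Int.cast : ℤ → ℚ_[p]) - 1) ^ j) atTop (nhds L))
    (t : ℕ → ℕ)
    (ht : ∀ n, t n = (A ^ p ^ n - 1).det.natAbs /
        p ^ ((A ^ p ^ n - 1).det.natAbs.factorization p)) :
    (∀ n : ℕ, (A ^ p ^ n - 1).det ≠ 0) ∧ L.det ≠ 0 ∧
      ∃ T : ℤ_[p], (T : ℚ_[p]) = (ε : ℚ_[p]) * L.det * (p : ℚ_[p]) ^ (-(L.det.valuation)) ∧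
        Tendsto (fun n => ((t n : ℤ_[p]))) atTop (nhds T) := by
  have hne : ∀ n : ℕ, (A ^ p ^ n - 1).det ≠ 0 := fun n =>
    aux_ne A hroot _ (pow_pos hp.out.pos n)
  have hp0 : (p : ℚ_[p]) ≠ 0 := by exact_mod_cast hp.out.ne_zero
  set D : ℕ → ℚ_[p] := fun n => (((A ^ p ^ n - 1).det : ℤ) : ℚ_[p]) / (p : ℚ_[p]) ^ (n * N) with hD
  have hDne : ∀ n, D n ≠ 0 := fun n =>
    div_ne_zero (by exact_mod_cast hne n) (pow_ne_zero _ hp0)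
  have hDlim : Tendsto D atTop (nhds L.det) := by
    have h1 : Tendsto (fun n : ℕ => Matrix.of fun a b =>
        (((A ^ p ^ n - 1) a b : ℤ) : ℚ_[p]) / (p : ℚ_[p]) ^ n) atTop (nhds L) :=
      tendsto_pi_nhds.mpr fun a => tendsto_pi_nhds.mpr fun b => aux_lim p A hA1 L hL a b
    have h2 := ((continuous_id.matrix_det (R := ℚ_[p]) (n := Fin N)).tendsto L).comp h1
    refine h2.congr fun n => ?_
    have h3 : (Matrix.of fun a b => (((A ^ p ^ n - 1) a b : ℤ) : ℚ_[p]) / (p : ℚ_[p]) ^ n) =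
        ((p : ℚ_[p]) ^ n)⁻¹ • (Int.castRingHom ℚ_[p]).mapMatrix (A ^ p ^ n - 1) := by
      ext a b
      rw [Matrix.smul_apply, smul_eq_mul, mul_comm, ← div_eq_mul_inv]
      rfl
    rw [Function.comp_apply, id, h3, Matrix.det_smul, ← RingHom.map_det, Fintype.card_fin, hD,
      inv_pow, ← pow_mul, mul_comm, ← div_eq_mul_inv]
    rfl
  have hnorm : ∀ n, ‖D (n + 1)‖ = ‖D 1‖ := by
    intro n
    induction n with
    | zero => rfl
    | succ n ih =>
      rw [← ih]
      obtain ⟨d, hd, h⟩ := aux_step p A hA1 (n + 1) (by omega)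
      have hd1 : ‖(d : ℚ_[p])‖ = 1 := by
        rw [Padic.norm_intCast_eq_one_iff, isCoprime_comm]
        exact (Int.prime_iff_natAbs_prime.mpr (by simpa using hp.out)).coprime_iff_not_dvd.mpr hd
      have : D (n + 1 + 1) = D (n + 1) * d := by
        rw [hD]
        dsimp only
        rw [h, div_mul_eq_mul_div, div_eq_div_iff (pow_ne_zero _ hp0) (pow_ne_zero _ hp0)]
        push_cast
        ring
      rw [this, norm_mul, hd1, mul_one]
  have hLn : ‖L.det‖ = ‖D 1‖ := by
    refine tendsto_nhds_unique (((tendsto_add_atTop_iff_nat 1).mpr hDlim).norm) ?_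
    simp only [hnorm]
    exact tendsto_const_nhds
  have hL0 : L.det ≠ 0 := by
    rw [← norm_ne_zero_iff, hLn, norm_ne_zero_iff]; exact hDne 1
  refine ⟨hne, hL0, ?_⟩
  have hεs : ∀ n, ((A ^ p ^ (n + 1) - 1).det).sign = ε := fun n => by
    rw [hε]; exact aux_signs p A hne n
  have hεn : ‖(ε : ℚ_[p])‖ = 1 := by
    rw [← hεs 0]
    rcases lt_or_gt_of_ne (hne (0 + 1)) with h | h
    · rw [Int.sign_eq_neg_one_of_neg h]; simp
    · rw [Int.sign_eq_one_of_pos h]; simp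
  have hpR : (0 : ℝ) < p := by exact_mod_cast hp.out.pos
  have hTn : ‖(ε : ℚ_[p]) * L.det * (p : ℚ_[p]) ^ (-(L.det.valuation))‖ ≤ 1 := by
    rw [norm_mul, norm_mul, hεn, one_mul, Padic.norm_eq_zpow_neg_valuation hL0,
      Padic.norm_p_zpow, neg_neg, ← zpow_add₀ hpR.ne']
    simp
  refine ⟨⟨_, hTn⟩, rfl, ?_⟩
  rw [← tendsto_add_atTop_iff_nat 1]
  refine tendsto_subtype_rng.mpr ?_
  have hfin : Tendsto (fun n => (ε : ℚ_[p]) * D (n + 1) * (p : ℚ_[p]) ^ (-(L.det.valuation))) atTop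
      (nhds ((ε : ℚ_[p]) * L.det * (p : ℚ_[p]) ^ (-(L.det.valuation)))) :=
    ((((tendsto_add_atTop_iff_nat 1).mpr hDlim).const_mul _).mul_const _)
  refine hfin.congr fun n => ?_
  have hval : (D (n + 1)).valuation = L.det.valuation := by
    have h := (hnorm n).trans hLn.symm
    rw [Padic.norm_eq_zpow_neg_valuation (hDne _), Padic.norm_eq_zpow_neg_valuation hL0] at h
    have := zpow_right_injective₀ hpR (by exact_mod_cast hp.out.one_lt.ne') h
    exact neg_injective this
  have e1 := Nat.ordProj_mul_ordCompl_eq_self (A ^ p ^ (n + 1) - 1).det.natAbs p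
  rw [← ht] at e1
  set d := (A ^ p ^ (n + 1) - 1).det with hd
  have hdD : (d : ℚ_[p]) = D (n + 1) * (p : ℚ_[p]) ^ ((n + 1) * N) :=
    (div_mul_cancel₀ _ (pow_ne_zero _ hp0)).symm
  have habs : ((d.natAbs : ℕ) : ℚ_[p]) = ε * d := by
    rw [← hεs n, ← hd, ← Int.cast_mul, Int.sign_mul_self_eq_abs, Int.abs_eq_natAbs]
    simp
  have hd0 : d ≠ 0 := hne _
  have hv : (d.natAbs.factorization p : ℤ) = L.det.valuation + ((n + 1) * N : ℕ) := by
    rw [Nat.factorization_def _ hp.out, ← hval]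
    have : (d : ℚ_[p]).valuation = (padicValNat p d.natAbs : ℤ) := by
      rw [Padic.valuation_intCast]; rfl
    rw [← this, hdD, Padic.valuation_mul (hDne _) (pow_ne_zero _ hp0), Padic.valuation_pow,
      Padic.valuation_p, mul_one]
  have e2 := congrArg (Nat.cast : ℕ → ℚ_[p]) e1
  rw [Nat.cast_mul, habs, Nat.cast_pow, ← zpow_natCast, hv, hdD, zpow_add₀ hp0, zpow_natCast] at e2
  have hz : (p : ℚ_[p]) ^ L.det.valuation ≠ 0 := zpow_ne_zero _ hp0
  have hw : (p : ℚ_[p]) ^ ((n + 1) * N) ≠ 0 := pow_ne_zero _ hp0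
  rw [zpow_neg, ← div_eq_mul_inv, div_eq_iff hz]
  apply mul_right_cancel₀ hw
  rw [PadicInt.coe_natCast]
  linear_combination -e2
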